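/- arXiv:2106.06495 — 2 statements merged into one kernel-verified Lean document; each statement's English description precedes it below -/
import Mathlib

section
/- Let f, g ∈ 𝒦, α < 0 and β < 0 with α + 2β ≥ -1. Then ∫_{θ₁}^{θ₂} Re(1 + z C_{α,β}[f,g]''(z)/C_{α,β}[f,g]'(z)) dθ > (α + 2β)π ≥ -π for all 0 < r < 1 and 0 ≤ θ₁ < θ₂ ≤ 2π; hence C_{α,β}[f,g] is close-to-convex. -/
open Complex Metric Real

/-- The class 𝔉: analytic on the unit disk, `f 0 = 0`, `f' 0 = 1`, `f'` nonvanishing. -/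
def Fclass (f : ℂ → ℂ) : Prop :=
  DifferentiableOn ℂ f (ball 0 1) ∧ f 0 = 0 ∧ deriv f 0 = 1 ∧
    ∀ z ∈ ball (0:ℂ) 1, deriv f z ≠ 0

/-- Normalized convex functions: `Re (1 + z f''/f') > 0` on the unit disk. -/
def Kclass (f : ℂ → ℂ) : Prop :=
  Fclass f ∧ ∀ z ∈ ball (0:ℂ) 1, 0 < (1 + z * deriv (deriv f) z / deriv f z).re

/-!
Put `u z = f z / z`, filled in by `1` at `0`. Then `C' = u ^ α * g' ^ β`, so

`1 + z C'' / C' = 1 + α * (z u' / u) + β * (z g'' / g')`.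

Convexity of `g` says `Re (z g'' / g') > -1`, and the Marx–Strohhäcker theorem gives
`Re (z u' / u) > -1 / 2`. Both functions vanish at `0`, so by the mean value property their real
parts integrate to `0` over a full circle; bounding them below on the complementary arc bounds their
integrals over `[θ₁, θ₂]` by `π - (θ₂ - θ₁) / 2` and `2π - (θ₂ - θ₁)`. Since `α, β ≤ 0` these upper
bounds turn into the lower bound `(α + 2β)π + (1 - α / 2 - β) (θ₂ - θ₁)`.

The Marx–Strohhäcker theorem, and the fact that `u` and `g'` avoid the cut of the principal powers,
both come from one differential subordination, proved by Jack's lemma.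
-/

section JackLemma

theorem one_le_re_deriv_of_mapsTo_ball {F : ℂ → ℂ} {d : ℂ}
    (hF : DifferentiableOn ℂ F (ball 0 1)) (hmaps : Set.MapsTo F (ball 0 1) (closedBall 0 1))
    (hF0 : F 0 = 0) (hF1 : F 1 = 1) (hd : HasDerivAt F d 1) : 1 ≤ d.re := by
  have hderiv : HasDerivAt (fun t : ℝ => (F t).re) d.re 1 :=
    HasDerivAt.real_of_complex (z := 1) (by simpa using hd)
  have hslope := (hasDerivWithinAt_iff_tendsto_slope' (s := Set.Iio 1) (by simp)).1
    hderiv.hasDerivWithinAt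
  refine ge_of_tendsto hslope ?_
  filter_upwards [Ioo_mem_nhdsLT (zero_lt_one' ℝ)] with t ht
  have hnorm : ‖(t : ℂ)‖ = t := by rw [norm_real, norm_of_nonneg ht.1.le]
  have hschwarz : (F t).re ≤ t := calc
    (F t).re ≤ ‖F t‖ := re_le_norm _
    _ ≤ ‖(t : ℂ)‖ := norm_le_norm_of_mapsTo_ball hF hmaps hF0 (hnorm.trans_lt ht.2)
    _ = t := hnorm
  rw [slope_def_field, ofReal_one, hF1, one_re, one_le_div_of_neg (by linarith [ht.2])]
  linarith

theorem im_deriv_eq_zero_of_mapsTo_sphere {F : ℂ → ℂ} {d : ℂ}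
    (hmaps : Set.MapsTo F (sphere 0 1) (closedBall 0 1)) (hF1 : F 1 = 1)
    (hd : HasDerivAt F d 1) : d.im = 0 := by
  have hexp : HasDerivAt (fun x : ℂ => exp (x * I)) I ((0 : ℝ) : ℂ) := by
    simpa using ((hasDerivAt_id ((0 : ℝ) : ℂ)).mul_const I).cexp
  have hderiv := (HasDerivAt.comp (h₂ := F) (h := fun x : ℂ => exp (x * I)) ((0 : ℝ) : ℂ)
    (by simpa using hd) hexp).real_of_complex
  have hmax : IsLocalMax (fun x : ℝ => ((F ∘ fun x : ℂ => exp (x * I)) x).re) 0 := by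
    refine Filter.Eventually.of_forall fun x => ?_
    simp only [Function.comp, ofReal_zero, zero_mul, Complex.exp_zero, hF1, one_re]
    have hx : exp (x * I) ∈ sphere (0 : ℂ) 1 := by simp [norm_exp_ofReal_mul_I]
    exact (re_le_norm _).trans (mem_closedBall_zero_iff.1 (hmaps hx))
  simpa using hmax.hasDerivAt_eq_zero hderiv

/-- **Jack's lemma**. -/
theorem exists_one_le_mul_deriv_eq {w : ℂ → ℂ} {R : ℝ} (hw : DifferentiableOn ℂ w (ball 0 R))
    (hw0 : w 0 = 0) {z₀ : ℂ} (hz₀ : z₀ ∈ ball (0 : ℂ) R) (hwz₀ : w z₀ ≠ 0)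
    (hmax : ∀ z, ‖z‖ ≤ ‖z₀‖ → ‖w z‖ ≤ ‖w z₀‖) :
    ∃ k : ℝ, 1 ≤ k ∧ z₀ * deriv w z₀ = k * w z₀ := by
  set F : ℂ → ℂ := fun ζ => w (z₀ * ζ) / w z₀ with hF
  have hmaps : Set.MapsTo F (closedBall 0 1) (closedBall 0 1) := fun ζ hζ => by
    rw [mem_closedBall_zero_iff] at hζ ⊢
    rw [hF, norm_div, div_le_one (norm_pos_iff.2 hwz₀)]
    refine hmax _ ?_
    rw [norm_mul]
    exact mul_le_of_le_one_right (norm_nonneg _) hζ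
  have hF0 : F 0 = 0 := by simp [hF, hw0]
  have hF1 : F 1 = 1 := by simp [hF, hwz₀]
  have hFdiff : DifferentiableOn ℂ F (ball 0 1) := by
    refine (hw.comp (t := ball 0 R) (by fun_prop) fun ζ hζ => ?_).div_const _
    rw [mem_ball_zero_iff] at hζ hz₀ ⊢
    rw [norm_mul]
    exact (mul_le_of_le_one_right (norm_nonneg _) hζ.le).trans_lt hz₀
  set d : ℂ := deriv w z₀ * z₀ / w z₀ with hd
  have hFderiv : HasDerivAt F d 1 := by
    have hwderiv : HasDerivAt w (deriv w z₀) (z₀ * 1) := by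
      rw [mul_one]
      exact (hw.differentiableAt (isOpen_ball.mem_nhds hz₀)).hasDerivAt
    exact (hwderiv.comp 1 (by simpa using (hasDerivAt_id (1 : ℂ)).const_mul z₀)).div_const _
  have hre : 1 ≤ d.re :=
    one_le_re_deriv_of_mapsTo_ball hFdiff (hmaps.mono_left ball_subset_closedBall) hF0 hF1 hFderiv
  have him : d.im = 0 :=
    im_deriv_eq_zero_of_mapsTo_sphere (hmaps.mono_left sphere_subset_closedBall) hF1 hFderiv
  refine ⟨d.re, hre, ?_⟩
  rw [show (d.re : ℂ) = d from Complex.ext rfl (by simp [him]), hd]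
  field_simp

theorem exists_eq_and_forall_norm_le_imp_le {E : Type*} [NormedAddCommGroup E] [NormedSpace ℝ E]
    [ProperSpace E] {φ : E → ℝ} {R a : ℝ} (hφ : ContinuousOn φ (ball 0 R)) (hφ0 : φ 0 < a)
    {z₁ : E} (hz₁ : z₁ ∈ ball (0 : E) R) (ha : a ≤ φ z₁) :
    ∃ z₀ ∈ ball (0 : E) R, φ z₀ = a ∧ ∀ z, ‖z‖ ≤ ‖z₀‖ → φ z ≤ a := by
  have hsub : closedBall (0 : E) ‖z₁‖ ⊆ ball 0 R :=
    closedBall_subset_ball (mem_ball_zero_iff.1 hz₁)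
  have hcompact : IsCompact (closedBall (0 : E) ‖z₁‖ ∩ φ ⁻¹' Set.Ici a) :=
    (isCompact_closedBall _ _).of_isClosed_subset
      ((hφ.mono hsub).preimage_isClosed_of_isClosed isClosed_closedBall isClosed_Ici)
      Set.inter_subset_left
  obtain ⟨z₀, ⟨hz₀, haz₀⟩, hmin⟩ :=
    hcompact.exists_isMinOn ⟨z₁, by simp, ha⟩ (continuous_norm.continuousOn (s := _))
  rw [mem_closedBall_zero_iff] at hz₀
  have hlt : ∀ z ∈ ball (0 : E) ‖z₀‖, φ z ≤ a := fun z hz => by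
    by_contra! hgt
    rw [mem_ball_zero_iff] at hz
    exact hz.not_ge (hmin ⟨by simpa using hz.le.trans hz₀, hgt.le⟩)
  have hne : ‖z₀‖ ≠ 0 := fun h => by
    rw [norm_eq_zero] at h
    exact hφ0.not_ge (h ▸ haz₀)
  have hle : ∀ z, ‖z‖ ≤ ‖z₀‖ → φ z ≤ a := fun z hz => by
    have hclosure : closure (ball (0 : E) ‖z₀‖) = closedBall 0 ‖z₀‖ := closure_ball _ hne
    refine le_on_closure (g := fun _ => a) hlt ?_ continuousOn_const
      (by rw [hclosure]; simpa using hz)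
    rw [hclosure]
    exact hφ.mono ((closedBall_subset_closedBall hz₀).trans hsub)
  exact ⟨z₀, hsub (by simpa using hz₀), le_antisymm (hle z₀ le_rfl) haz₀, hle⟩

theorem norm_lt_one_of_forall_mul_deriv_ne {w : ℂ → ℂ} {R : ℝ}
    (hw : DifferentiableOn ℂ w (ball 0 R)) (hw0 : w 0 = 0)
    (hne : ∀ z ∈ ball (0 : ℂ) R, ‖w z‖ = 1 → ∀ k : ℝ, 1 ≤ k → z * deriv w z ≠ k * w z) :
    ∀ z ∈ ball (0 : ℂ) R, ‖w z‖ < 1 := by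
  by_contra! ⟨z₁, hz₁, hwz₁⟩
  obtain ⟨z₀, hz₀, hnorm, hle⟩ :=
    exists_eq_and_forall_norm_le_imp_le hw.continuousOn.norm (by simp [hw0]) hz₁ hwz₁
  obtain ⟨k, hk, hderiv⟩ := exists_one_le_mul_deriv_eq hw hw0 hz₀
    (norm_ne_zero_iff.1 (by simp [hnorm])) fun z hz => (hle z hz).trans_eq hnorm.symm
  exact hne z₀ hz₀ hnorm k hk hderiv

end JackLemma

section Subordination

theorem re_inv_eq_half_add {q : ℂ} (hq : q ≠ 0) :
    q⁻¹.re = 1 / 2 + (1 - ‖1 - q‖ ^ 2) / (2 * ‖q‖ ^ 2) := by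
  have hpos : normSq q ≠ 0 := normSq_eq_zero.not.2 hq
  rw [inv_re, ← normSq_eq_norm_sq, ← normSq_eq_norm_sq]
  field_simp
  simp only [normSq_apply, sub_re, sub_im, one_re, one_im]
  ring

theorem half_lt_re_inv_of_norm_one_sub_lt_one {q : ℂ} (hq : ‖1 - q‖ < 1) : 1 / 2 < q⁻¹.re := by
  have hq0 : q ≠ 0 := by
    rintro rfl
    simp at hq
  have hsq : ‖1 - q‖ ^ 2 < 1 := pow_lt_one₀ (norm_nonneg _) hq two_ne_zero
  rw [re_inv_eq_half_add hq0, lt_add_iff_pos_right]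
  have := norm_pos_iff.2 hq0
  exact div_pos (by linarith) (by positivity)

theorem re_eq_neg_half_of_mul_eq_mul_one_sub {P q : ℂ} {m : ℝ} (hq : ‖1 - q‖ = 1) (hm : m ≠ 0)
    (h : P * q = m * (1 - q)) : P.re = -m / 2 := by
  have hq0 : q ≠ 0 := by
    rintro rfl
    exact hm (by simpa using h.symm)
  have hP : P = m * (q⁻¹ - 1) := by
    field_simp
    linear_combination h
  rw [hP, re_ofReal_mul, sub_re, one_re, re_inv_eq_half_add hq0, hq]
  ring

/-- Briot–Bouquet subordination for `p = 1 / q`, where the equation reads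
`P = z p' / p + b (p - 1)`; stated through `q`, which is allowed to vanish a priori. -/
theorem half_lt_re_inv_of_briotBouquet {q P : ℂ → ℂ} {R b : ℝ}
    (hq : DifferentiableOn ℂ q (ball 0 R)) (hq0 : q 0 = 1) (hb : -1 < b)
    (hP : ∀ z ∈ ball (0 : ℂ) R, P z * q z = b * (1 - q z) - z * deriv q z)
    (hre : ∀ z ∈ ball (0 : ℂ) R, -(1 + b) / 2 < (P z).re) :
    ∀ z ∈ ball (0 : ℂ) R, 1 / 2 < (q z)⁻¹.re := by
  suffices ∀ z ∈ ball (0 : ℂ) R, ‖1 - q z‖ < 1 from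
    fun z hz => half_lt_re_inv_of_norm_one_sub_lt_one (this z hz)
  refine norm_lt_one_of_forall_mul_deriv_ne (hq.const_sub 1) (by simp [hq0])
    fun z hz hnorm k hk hderiv => ?_
  rw [deriv_const_sub] at hderiv
  have hPre : (P z).re = -(k + b) / 2 := by
    refine re_eq_neg_half_of_mul_eq_mul_one_sub hnorm (by linarith) ?_
    rw [hP z hz]
    push_cast
    linear_combination hderiv
  linarith [hre z hz]

end Subordination

section LogDeriv

theorem sub_eq_mul_dslope_zero (f : ℂ → ℂ) (z : ℂ) : f z - f 0 = z * dslope f 0 z := by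
  simpa using (sub_smul_dslope f 0 z).symm

theorem differentiableOn_dslope_zero {f : ℂ → ℂ} {R : ℝ} (hf : DifferentiableOn ℂ f (ball 0 R)) :
    DifferentiableOn ℂ (dslope f 0) (ball 0 R) := fun z hz =>
  (differentiableOn_dslope (ball_mem_nhds 0 (pos_of_mem_ball hz))).2 hf z hz

theorem deriv_eq_dslope_add_mul_deriv {f : ℂ → ℂ} {z : ℂ}
    (hf : DifferentiableAt ℂ (dslope f 0) z) :
    deriv f z = dslope f 0 z + z * deriv (dslope f 0) z := by
  have hf_eq : f = fun z => z * dslope f 0 z + f 0 := funext fun z => by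
    rw [← sub_eq_mul_dslope_zero, sub_add_cancel]
  have h := (((hasDerivAt_id z).mul hf.hasDerivAt).add_const (f 0)).deriv
  simpa [← hf_eq] using h

theorem exists_hasDerivAt_logDeriv_and_exp_eq {h : ℂ → ℂ} {c : ℂ} {R : ℝ}
    (hh : DifferentiableOn ℂ h (ball c R)) (hne : ∀ z ∈ ball c R, h z ≠ 0) :
    ∃ L : ℂ → ℂ, L c = log (h c) ∧
      ∀ z ∈ ball c R, HasDerivAt L (logDeriv h z) z ∧ exp (L z) = h z := by
  obtain ⟨L, hLc, hL⟩ :=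
    ((hh.deriv isOpen_ball).div hh hne).isExactOn_ball.with_val_at c (log (h c))
  have hLdiff : DifferentiableOn ℂ L (ball c R) := fun z hz =>
    (hL z hz).differentiableAt.differentiableWithinAt
  obtain ⟨k, -, hk⟩ := (logDeriv_eqOn_iff hh hLdiff.cexp isOpen_ball
    (convex_ball c R).isPreconnected (fun z _ => Complex.exp_ne_zero _) hne).1 fun z hz => by
      rw [logDeriv_apply (fun z => exp (L z)), (hL z hz).cexp.deriv,
        mul_div_cancel_left₀ _ (Complex.exp_ne_zero _), logDeriv, Pi.div_apply]
  refine ⟨L, hLc, fun z hz => ⟨hL z hz, ?_⟩⟩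
  have hc : c ∈ ball c R := mem_ball_self (pos_of_mem_ball hz)
  have hk1 : k = 1 := by simpa [hLc, exp_log (hne c hc), hne c hc] using hk hc
  simpa [hk1] using (hk hz).symm

theorem sq_mem_slitPlane_of_re_pos {s : ℂ} (hs : 0 < s.re) : s ^ 2 ∈ slitPlane := by
  rw [mem_slitPlane_iff, sq, mul_re, mul_im]
  rcases eq_or_ne s.im 0 with him | him
  · left
    rw [him]
    nlinarith
  · right
    have := mul_ne_zero hs.ne' him
    contrapose! this
    linarith

theorem mem_slitPlane_of_neg_one_lt_re_mul_logDeriv {h : ℂ → ℂ} {R : ℝ}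
    (hh : DifferentiableOn ℂ h (ball 0 R)) (hne : ∀ z ∈ ball (0 : ℂ) R, h z ≠ 0) (hh0 : h 0 = 1)
    (hre : ∀ z ∈ ball (0 : ℂ) R, -1 < (z * logDeriv h z).re) :
    ∀ z ∈ ball (0 : ℂ) R, h z ∈ slitPlane := by
  obtain ⟨L, hL0, hL⟩ := exists_hasDerivAt_logDeriv_and_exp_eq hh hne
  -- The branch `q = h ^ (-1 / 2)` with `q 0 = 1` satisfies `Re (1 / q) > 1 / 2`.
  set q : ℂ → ℂ := fun z => exp (-L z / 2) with hq
  have hqderiv : ∀ z ∈ ball (0 : ℂ) R, HasDerivAt q (q z * (-logDeriv h z / 2)) z :=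
    fun z hz => ((hL z hz).1.neg.div_const 2).cexp
  have hq_re : ∀ z ∈ ball (0 : ℂ) R, 1 / 2 < (q z)⁻¹.re := by
    refine half_lt_re_inv_of_briotBouquet (b := 0) (P := fun z => z * logDeriv h z / 2)
      (fun z hz => (hqderiv z hz).differentiableAt.differentiableWithinAt)
      (by simp [hq, hL0, hh0]) (by norm_num) (fun z hz => ?_) fun z hz => ?_
    · rw [(hqderiv z hz).deriv]
      push_cast
      ring
    · rw [div_ofNat_re]
      linarith [hre z hz]
  intro z hz
  have hsq : (q z)⁻¹ ^ 2 = h z := by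
    rw [hq, ← Complex.exp_neg, ← Complex.exp_nat_mul, ← (hL z hz).2]
    push_cast
    ring_nf
  exact hsq ▸ sq_mem_slitPlane_of_re_pos (by linarith [hq_re z hz])

/-- **Marx–Strohhäcker theorem**: a convex function is starlike of order `1 / 2`. In terms of
`u = f / z` this is `Re (z u' / u) > -1 / 2`, as `z f' / f = 1 + z u' / u`. -/
theorem dslope_ne_zero_and_neg_half_lt_re_mul_logDeriv {f : ℂ → ℂ} {R : ℝ}
    (hf : DifferentiableOn ℂ f (ball 0 R)) (hne : ∀ z ∈ ball (0 : ℂ) R, deriv f z ≠ 0)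
    (hre : ∀ z ∈ ball (0 : ℂ) R, -1 < (z * logDeriv (deriv f) z).re) :
    ∀ z ∈ ball (0 : ℂ) R, dslope f 0 z ≠ 0 ∧ -(1 / 2) < (z * logDeriv (dslope f 0) z).re := by
  intro z hz
  have hu := differentiableOn_dslope_zero hf
  have hf' := hf.deriv isOpen_ball
  have hderiv : ∀ z ∈ ball (0 : ℂ) R, deriv f z = dslope f 0 z + z * deriv (dslope f 0) z :=
    fun z hz => deriv_eq_dslope_add_mul_deriv (hu.differentiableAt (isOpen_ball.mem_nhds hz))
  have hq_re : 1 / 2 < (dslope f 0 z / deriv f z)⁻¹.re := by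
    refine half_lt_re_inv_of_briotBouquet (q := fun z => dslope f 0 z / deriv f z) (b := 1)
      (P := fun z => z * logDeriv (deriv f) z) (hu.div hf' hne) ?_ (by norm_num)
      (fun z hz => ?_) (fun z hz => ?_) z hz
    · simp [hne 0 (mem_ball_self (pos_of_mem_ball hz))]
    · have hnhds := isOpen_ball.mem_nhds hz
      have hz' := hne z hz
      rw [deriv_fun_div (hu.differentiableAt hnhds) (hf'.differentiableAt hnhds) hz',
        logDeriv_apply, ofReal_one]
      field_simp
      linear_combination -(deriv f z) * hderiv z hz
    · linarith [hre z hz]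
  have hu0 : dslope f 0 z ≠ 0 := fun h0 => by
    norm_num [h0] at hq_re
  refine ⟨hu0, ?_⟩
  have hratio : (dslope f 0 z / deriv f z)⁻¹ = 1 + z * logDeriv (dslope f 0) z := by
    rw [inv_div, hderiv z hz, logDeriv_apply]
    field_simp
  rw [hratio, add_re, one_re] at hq_re
  linarith

theorem logDeriv_cpow_const {u : ℂ → ℂ} {z : ℂ} (a : ℂ) (hu : DifferentiableAt ℂ u z)
    (huz : u z ∈ slitPlane) : logDeriv (fun z => u z ^ a) z = a * logDeriv u z := by
  have hu0 := slitPlane_ne_zero huz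
  rw [logDeriv_apply, deriv_cpow_const hu huz, cpow_sub _ _ hu0, cpow_one, logDeriv_apply]
  have : u z ^ a ≠ 0 := by simp [cpow_eq_zero_iff, hu0]
  field_simp

end LogDeriv

section Integrals

theorem intervalIntegral_circleMap_le {φ : ℂ → ℝ} {c : ℂ} {r a θ₁ θ₂ : ℝ}
    (hφ : CircleIntegrable φ c r) (ha : ∀ z ∈ sphere c |r|, a ≤ φ z) (hθ : θ₂ - θ₁ ≤ 2 * π) :
    ∫ θ in θ₁..θ₂, φ (circleMap c r θ) ≤
      2 * π * circleAverage φ c r - a * (2 * π - (θ₂ - θ₁)) := by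
  have hper : Function.Periodic (fun θ => φ (circleMap c r θ)) (2 * π) :=
    fun θ => by simp [periodic_circleMap c r θ]
  have hint : ∀ s t, IntervalIntegrable (fun θ => φ (circleMap c r θ)) MeasureTheory.volume s t :=
    hper.intervalIntegrable₀ two_pi_pos.ne' hφ
  have hfull : ∫ θ in θ₁..θ₁ + 2 * π, φ (circleMap c r θ) = 2 * π * circleAverage φ c r := by
    rw [hper.intervalIntegral_add_eq θ₁ 0, zero_add, circleAverage_def, smul_eq_mul,
      mul_inv_cancel_left₀ two_pi_pos.ne']
  have hrest : a * (2 * π - (θ₂ - θ₁)) ≤ ∫ θ in θ₂..θ₁ + 2 * π, φ (circleMap c r θ) := by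
    have := intervalIntegral.integral_mono_on (by linarith : θ₂ ≤ θ₁ + 2 * π)
      (intervalIntegrable_const (c := a)) (hint _ _)
      fun θ _ => ha _ (circleMap_mem_sphere' c r θ)
    rw [intervalIntegral.integral_const, smul_eq_mul] at this
    linarith
  have := intervalIntegral.integral_add_adjacent_intervals (hint θ₁ θ₂) (hint θ₂ (θ₁ + 2 * π))
  linarith

theorem hasDerivAt_intervalIntegral_mul {h : ℂ → ℂ} {R : ℝ} (hh : DifferentiableOn ℂ h (ball 0 R))
    {z : ℂ} (hz : z ∈ ball (0 : ℂ) R) :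
    HasDerivAt (fun z : ℂ => ∫ t in (0 : ℝ)..1, h (t * z) * z) (h z) z := by
  obtain ⟨H, hH0, hH⟩ := hh.isExactOn_ball.with_val_at 0 0
  refine (hH z hz).congr_of_eventuallyEq ?_
  filter_upwards [isOpen_ball.mem_nhds hz] with ζ hζ
  have hmem : ∀ t ∈ Set.uIcc (0 : ℝ) 1, (t : ℂ) * ζ ∈ ball (0 : ℂ) R := fun t ht => by
    rw [Set.uIcc_of_le zero_le_one] at ht
    rw [mem_ball_zero_iff] at hζ ⊢
    rw [norm_mul, norm_real, norm_of_nonneg ht.1]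
    exact (mul_le_of_le_one_left (norm_nonneg ζ) ht.2).trans_lt hζ
  have hderiv : ∀ t ∈ Set.uIcc (0 : ℝ) 1,
      HasDerivAt (fun t : ℝ => H (t * ζ)) (h (t * ζ) * ζ) t := fun t ht => by
    have := (hH _ (hmem t ht)).comp (t : ℂ) ((hasDerivAt_id (t : ℂ)).mul_const ζ)
    simpa using this.comp_ofReal
  have hcont : ContinuousOn (fun t : ℝ => h (t * ζ) * ζ) (Set.uIcc 0 1) :=
    (hh.continuousOn.comp (by fun_prop) hmem).mul continuousOn_const
  rw [intervalIntegral.integral_eq_sub_of_hasDerivAt hderiv hcont.intervalIntegrable]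
  simp [hH0]

end Integrals

section RadialLogDeriv

variable {h : ℂ → ℂ} {R r : ℝ}

theorem continuous_re_mul_logDeriv_circleMap (hh : DifferentiableOn ℂ h (ball 0 R))
    (hne : ∀ z ∈ ball (0 : ℂ) R, h z ≠ 0) (hr : |r| < R) :
    Continuous fun θ => (circleMap 0 r θ * logDeriv h (circleMap 0 r θ)).re := by
  have hcont : ContinuousOn (logDeriv h) (ball 0 R) :=
    ((hh.deriv isOpen_ball).div hh hne).continuousOn
  have hmem : ∀ θ, circleMap 0 r θ ∈ ball (0 : ℂ) R := fun θ => by simpa using hr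
  exact continuous_re.comp
    ((continuous_circleMap 0 r).mul (hcont.comp_continuous (continuous_circleMap 0 r) hmem))

theorem circleAverage_re_mul_logDeriv (hh : DifferentiableOn ℂ h (ball 0 R))
    (hne : ∀ z ∈ ball (0 : ℂ) R, h z ≠ 0) (hr : |r| < R) :
    circleAverage (fun z => (z * logDeriv h z).re) 0 r = 0 := by
  have hdiff : DifferentiableOn ℂ (fun z => z * logDeriv h z) (ball 0 R) :=
    differentiableOn_id.mul ((hh.deriv isOpen_ball).div hh hne)
  have hsub : closedBall (0 : ℂ) |r| ⊆ ball 0 R := closedBall_subset_ball hr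
  have hint : CircleIntegrable (fun z => z * logDeriv h z) 0 r :=
    (hdiff.continuousOn.mono (sphere_subset_closedBall.trans hsub)).circleIntegrable'
  have hmean := (hdiff.diffContOnCl_ball hsub).circleAverage
  have hre := reCLM.circleAverage_comp_comm hint
  rw [hmean, zero_mul, map_zero] at hre
  exact hre

/-- The Kim–Merkes bounds: `γ = 1 / 2` for `h = f / z` and `γ = 1` for `h = g'`. -/
theorem intervalIntegral_re_mul_logDeriv_le (hh : DifferentiableOn ℂ h (ball 0 R))
    (hne : ∀ z ∈ ball (0 : ℂ) R, h z ≠ 0) {γ : ℝ}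
    (hre : ∀ z ∈ ball (0 : ℂ) R, -γ ≤ (z * logDeriv h z).re) (hr : |r| < R) {θ₁ θ₂ : ℝ}
    (hθ : θ₂ - θ₁ ≤ 2 * π) :
    ∫ θ in θ₁..θ₂, (circleMap 0 r θ * logDeriv h (circleMap 0 r θ)).re ≤
      γ * (2 * π - (θ₂ - θ₁)) := by
  have hint : CircleIntegrable (fun z => (z * logDeriv h z).re) 0 r :=
    (continuous_re_mul_logDeriv_circleMap hh hne hr).intervalIntegrable _ _
  have := intervalIntegral_circleMap_le hint
    (fun z hz => hre z (closedBall_subset_ball hr (sphere_subset_closedBall hz))) hθ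
  rw [circleAverage_re_mul_logDeriv hh hne hr] at this
  linarith

end RadialLogDeriv

namespace Kclass

variable {f g : ℂ → ℂ}

theorem neg_one_lt_re_mul_logDeriv_deriv (hf : Kclass f) :
    ∀ z ∈ ball (0 : ℂ) 1, -1 < (z * logDeriv (deriv f) z).re := fun z hz => by
  have := hf.2 z hz
  rw [add_re, one_re, mul_div_assoc] at this
  rw [logDeriv_apply]
  linarith

theorem deriv_mem_slitPlane (hf : Kclass f) : ∀ z ∈ ball (0 : ℂ) 1, deriv f z ∈ slitPlane :=
  have ⟨⟨hdiff, _, hf'0, hne⟩, _⟩ := hf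
  mem_slitPlane_of_neg_one_lt_re_mul_logDeriv (hdiff.deriv isOpen_ball) hne hf'0
    hf.neg_one_lt_re_mul_logDeriv_deriv

theorem neg_half_lt_re_mul_logDeriv_dslope (hf : Kclass f) :
    ∀ z ∈ ball (0 : ℂ) 1, -(1 / 2) < (z * logDeriv (dslope f 0) z).re := fun z hz =>
  have ⟨⟨hdiff, _, _, hne⟩, _⟩ := hf
  (dslope_ne_zero_and_neg_half_lt_re_mul_logDeriv hdiff hne
    hf.neg_one_lt_re_mul_logDeriv_deriv z hz).2

theorem dslope_mem_slitPlane (hf : Kclass f) : ∀ z ∈ ball (0 : ℂ) 1, dslope f 0 z ∈ slitPlane := by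
  obtain ⟨⟨hdiff, -, hf'0, hne⟩, -⟩ := id hf
  refine mem_slitPlane_of_neg_one_lt_re_mul_logDeriv (differentiableOn_dslope_zero hdiff)
    (fun z hz => (dslope_ne_zero_and_neg_half_lt_re_mul_logDeriv hdiff hne
      hf.neg_one_lt_re_mul_logDeriv_deriv z hz).1) (by simp [hf'0]) fun z hz => ?_
  linarith [hf.neg_half_lt_re_mul_logDeriv_dslope z hz]

end Kclass

/-- The integrand `(f(w)/w)^α (g'(w))^β` of `C_{α,β}[f,g]`, with the removable singularity of
`f(w)/w` at `w = 0` filled in by `dslope f 0`. -/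
noncomputable def kimMerkesIntegrand (f g : ℂ → ℂ) (α β w : ℂ) : ℂ :=
  dslope f 0 w ^ α * deriv g w ^ β

section Integrand

variable {f g C : ℂ → ℂ} {α β z : ℂ}

theorem differentiableOn_kimMerkesIntegrand (hf : Kclass f) (hg : Kclass g) :
    DifferentiableOn ℂ (kimMerkesIntegrand f g α β) (ball 0 1) :=
  ((differentiableOn_dslope_zero hf.1.1).cpow_const hf.dslope_mem_slitPlane).mul
    ((hg.1.1.deriv isOpen_ball).cpow_const hg.deriv_mem_slitPlane)

theorem logDeriv_kimMerkesIntegrand (hf : Kclass f) (hg : Kclass g) (hz : z ∈ ball (0 : ℂ) 1) :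
    logDeriv (kimMerkesIntegrand f g α β) z =
      α * logDeriv (dslope f 0) z + β * logDeriv (deriv g) z := by
  have hnhds := isOpen_ball.mem_nhds hz
  have hu := (differentiableOn_dslope_zero hf.1.1).differentiableAt hnhds
  have hg' := (hg.1.1.deriv isOpen_ball).differentiableAt hnhds
  have huz := hf.dslope_mem_slitPlane z hz
  have hgz := hg.deriv_mem_slitPlane z hz
  rw [← logDeriv_cpow_const α hu huz, ← logDeriv_cpow_const β hg' hgz]
  exact logDeriv_mul z (by simp [cpow_eq_zero_iff, slitPlane_ne_zero huz])
    (by simp [cpow_eq_zero_iff, slitPlane_ne_zero hgz]) (hu.cpow_const huz) (hg'.cpow_const hgz)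

theorem hasDerivAt_of_forall_eq_integral (hf : Kclass f) (hg : Kclass g)
    (hC : ∀ z ∈ ball (0 : ℂ) 1, C z = ∫ t in (0 : ℝ)..1,
      (f (t * z) / (t * z)) ^ α * deriv g (t * z) ^ β * z) (hz : z ∈ ball (0 : ℂ) 1) :
    HasDerivAt C (kimMerkesIntegrand f g α β z) z := by
  refine (hasDerivAt_intervalIntegral_mul (differentiableOn_kimMerkesIntegrand hf hg)
    hz).congr_of_eventuallyEq ?_
  filter_upwards [isOpen_ball.mem_nhds hz] with ζ hζ
  rw [hC ζ hζ]
  refine intervalIntegral.integral_congr_uIoo fun t ht => ?_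
  rw [Set.uIoo_of_le zero_le_one] at ht
  rcases eq_or_ne ζ 0 with rfl | hζ0
  · simp
  · have htζ : (t : ℂ) * ζ ≠ 0 := mul_ne_zero (ofReal_ne_zero.2 ht.1.ne') hζ0
    have hquot : f (t * ζ) / (t * ζ) = dslope f 0 (t * ζ) := by
      rw [div_eq_iff htζ, mul_comm (dslope f 0 _), ← sub_eq_mul_dslope_zero, hf.1.2.1, sub_zero]
    simp only [kimMerkesIntegrand, hquot]

theorem one_add_mul_deriv_deriv_div_deriv_eq (hf : Kclass f) (hg : Kclass g)
    (hC : ∀ z ∈ ball (0 : ℂ) 1, C z = ∫ t in (0 : ℝ)..1,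
      (f (t * z) / (t * z)) ^ α * deriv g (t * z) ^ β * z) (hz : z ∈ ball (0 : ℂ) 1) :
    1 + z * deriv (deriv C) z / deriv C z =
      1 + α * (z * logDeriv (dslope f 0) z) + β * (z * logDeriv (deriv g) z) := by
  have hC' : deriv C =ᶠ[nhds z] kimMerkesIntegrand f g α β := by
    filter_upwards [isOpen_ball.mem_nhds hz] with ζ hζ
      using (hasDerivAt_of_forall_eq_integral hf hg hC hζ).deriv
  rw [mul_div_assoc, ← logDeriv_apply, (logDeriv_congr_nhds hC').eq_of_nhds,
    logDeriv_kimMerkesIntegrand hf hg hz]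
  ring

end Integrand

theorem stmt_14_general {f g C : ℂ → ℂ} (hf : Kclass f) (hg : Kclass g)
    {α β : ℝ} (hα : α ≤ 0) (hβ : β ≤ 0)
    (hC : ∀ z ∈ ball (0 : ℂ) 1, C z = ∫ t in (0 : ℝ)..1,
      (f (t * z) / (t * z)) ^ (α : ℂ) * deriv g (t * z) ^ (β : ℂ) * z)
    {r : ℝ} (hr : |r| < 1) {θ₁ θ₂ : ℝ} (hlt : θ₁ < θ₂) (hle : θ₂ - θ₁ ≤ 2 * π) :
    (α + 2 * β) * π < ∫ θ in θ₁..θ₂, (1 + circleMap 0 r θ * deriv (deriv C) (circleMap 0 r θ) /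
      deriv C (circleMap 0 r θ)).re := by
  have hu := differentiableOn_dslope_zero hf.1.1
  have hu0 : ∀ z ∈ ball (0 : ℂ) 1, dslope f 0 z ≠ 0 :=
    fun z hz => slitPlane_ne_zero (hf.dslope_mem_slitPlane z hz)
  have hg' := hg.1.1.deriv isOpen_ball
  have hg'0 := hg.1.2.2.2
  have hmem : ∀ θ, circleMap 0 r θ ∈ ball (0 : ℂ) 1 := fun θ => by simpa using hr
  have hu_le := intervalIntegral_re_mul_logDeriv_le hu hu0
    (fun z hz => (hf.neg_half_lt_re_mul_logDeriv_dslope z hz).le) hr hle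
  have hg_le := intervalIntegral_re_mul_logDeriv_le hg' hg'0
    (fun z hz => (hg.neg_one_lt_re_mul_logDeriv_deriv z hz).le) hr hle
  have hu_int := ((continuous_re_mul_logDeriv_circleMap hu hu0 hr).intervalIntegrable
    (μ := MeasureTheory.volume) θ₁ θ₂).const_mul α
  have hg_int := ((continuous_re_mul_logDeriv_circleMap hg' hg'0 hr).intervalIntegrable
    (μ := MeasureTheory.volume) θ₁ θ₂).const_mul β
  simp_rw [fun θ => one_add_mul_deriv_deriv_div_deriv_eq hf hg hC (hmem θ), add_re, one_re,
    re_ofReal_mul]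
  rw [intervalIntegral.integral_add (intervalIntegrable_const.add hu_int) hg_int,
    intervalIntegral.integral_add intervalIntegrable_const hu_int,
    intervalIntegral.integral_const_mul, intervalIntegral.integral_const_mul,
    intervalIntegral.integral_const, smul_eq_mul, mul_one]
  have hpos : 0 < (1 - α / 2 - β) * (θ₂ - θ₁) := mul_pos (by linarith) (by linarith)
  linarith [mul_le_mul_of_nonpos_left hu_le hα, mul_le_mul_of_nonpos_left hg_le hβ]

/-- for convex `f, g`, `α < 0`, `β < 0` with `α + 2β ≥ -1`, the Kaplan
integral of `C_{α,β}[f,g]` exceeds `(α + 2β)π ≥ -π`, hence close-to-convexity. -/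
theorem stmt_14 (f g : ℂ → ℂ) (hf : Kclass f) (hg : Kclass g)
    (α β : ℝ) (hα : α < 0) (hβ : β < 0) (hsum : -1 ≤ α + 2 * β)
    (C : ℂ → ℂ)
    (hC : ∀ z ∈ ball (0:ℂ) 1,
      C z = ∫ t in (0:ℝ)..1,
        (f ((t : ℂ) * z) / ((t : ℂ) * z)) ^ (α : ℂ)
          * (deriv g ((t : ℂ) * z)) ^ (β : ℂ) * z)
    (r : ℝ) (hr0 : 0 < r) (hr1 : r < 1)
    (θ₁ θ₂ : ℝ) (h1 : 0 ≤ θ₁) (h12 : θ₁ < θ₂) (h2 : θ₂ ≤ 2 * π) :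
    ((α + 2 * β) * π <
        ∫ θ in θ₁..θ₂,
          (1 + ((r : ℂ) * Complex.exp (θ * Complex.I))
              * deriv (deriv C) ((r : ℂ) * Complex.exp (θ * Complex.I))
              / deriv C ((r : ℂ) * Complex.exp (θ * Complex.I))).re)
    ∧
    (-π ≤ (α + 2 * β) * π) := by
  refine ⟨?_, by linarith [mul_le_mul_of_nonneg_right hsum pi_pos.le]⟩
  simpa only [circleMap_zero] using
    stmt_14_general hf hg hα.le hβ.le hC (abs_lt.2 ⟨by linarith, hr1⟩) h12 (by linarith)
end

section
/- Let f ∈ 𝒢 and α a real number with -3(1-λ) ≤ α ≤ 1-λ for some λ < 1. Then J_α[f](z) = ∫₀^z (f(w)/w)^α dw belongs to 𝒦(λ), i.e., Re(1 + z J_α[f]''(z)/J_α[f]'(z)) > λ on the unit disk. -/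
open Complex Metric

/-!
Write `p = z f' / f`. Differentiating `J' = (f / w) ^ α` gives `1 + z J'' / J' = α p + 1 - α`, so it
suffices to confine `Re p` to an interval. More generally, if `Re (1 + z f'' / f') < 1 + δ / 2` with
`0 < δ ≤ 1`, then `0 < Re p < 2 (1 + δ) / (2 + δ)`; the class `𝒢` is the case `δ = 1`.

To see this, put `ω = (1 + δ) (p - 1) / (1 + δ - p)`, which vanishes at `0`. If `‖ω‖ < 1` failed,
then at a point of smallest modulus with `‖ω‖ = 1` Jack's lemma would give `z ω' / ω = m ≥ 1`. There
`Re p⁻¹` is constant and `Re (1 + z f'' / f')` comes out as at least `1 + δ / 2`, a contradiction.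
The same principle applied to `1 - f / w` keeps `f / w` away from the branch cut of the power.
-/

open Set Topology
open scoped ComplexConjugate

section Jack

lemma norm_le_re_of_forall_re_mul_le {d : ℂ}
    (h : ∀ w ∈ closedBall (0 : ℂ) 1, (d * w).re ≤ d.re) : ‖d‖ ≤ d.re := by
  rcases eq_or_ne d 0 with rfl | hd
  · simp
  have hd' : (‖d‖ : ℂ) ≠ 0 := ofReal_ne_zero.2 (norm_ne_zero_iff.2 hd)
  have hrot : d * (conj d / ‖d‖) = ‖d‖ := by
    rw [← mul_div_assoc, mul_conj', pow_two, mul_div_cancel_right₀ _ hd']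
  have hmem : conj d / ‖d‖ ∈ closedBall (0 : ℂ) 1 := by simp [hd]
  simpa only [hrot, ofReal_re] using h _ hmem

open scoped ComplexOrder in
lemma one_le_deriv_one_of_norm_le_norm {φ : ℂ → ℂ} (hφ : DifferentiableAt ℂ φ 1) (h1 : φ 1 = 1)
    (hle : ∀ z ∈ closedBall (0 : ℂ) 1, ‖φ z‖ ≤ ‖z‖) : 1 ≤ deriv φ 1 := by
  -- `F` is nonnegative because `2 Re φ ≤ 2 ‖z‖ ≤ 1 + ‖z‖ ^ 2`, and it vanishes at `1`.
  let F : ℂ → ℝ := fun z ↦ 1 + ‖z‖ ^ 2 - 2 * (φ z).re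
  have hmin : IsMinOn F (closedBall 0 1) 1 := isMinOn_iff.2 fun z hz ↦ by
    have := (re_le_norm (φ z)).trans (hle z hz)
    simp only [F, h1, norm_one, one_re]
    nlinarith [sq_nonneg (‖z‖ - 1)]
  have hF := (((hasStrictFDerivAt_norm_sq (1 : ℂ)).hasFDerivAt.const_add 1).fun_sub
    ((reCLM.hasFDerivAt.comp (1 : ℂ)
      (hφ.hasDerivAt.hasFDerivAt.restrictScalars ℝ)).const_mul 2)).hasFDerivWithinAt
      (s := closedBall 0 1)
  rw [← sub_nonneg, ← re_eq_norm]
  refine (re_le_norm _).antisymm (norm_le_re_of_forall_re_mul_le fun w hw ↦ ?_)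
  have hcone : w - 1 ∈ posTangentConeAt (closedBall (0 : ℂ) 1) 1 :=
    sub_mem_posTangentConeAt_of_segment_subset
      ((convex_closedBall 0 1).segment_subset (by simp) hw)
  have hdir : 2 * (deriv φ 1 * (w - 1)).re ≤ 2 * (w - 1).re := by
    simpa [mul_comm] using hmin.localize.hasFDerivWithinAt_nonneg hF hcone
  have hsplit : (deriv φ 1 - 1) * w = (deriv φ 1 - 1) + (deriv φ 1 * (w - 1) - (w - 1)) := by ring
  rw [hsplit, add_re, sub_re (_ * _)]
  linarith

/-- **Jack's lemma**. -/
lemma exists_one_le_mul_deriv_eq_of_isMaxOn_norm {ω : ℂ → ℂ} {z₀ : ℂ}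
    (hω : DifferentiableOn ℂ ω (ball 0 ‖z₀‖)) (hω₀ : DifferentiableAt ℂ ω z₀) (h0 : ω 0 = 0)
    (hmax : IsMaxOn (fun z ↦ ‖ω z‖) (closedBall 0 ‖z₀‖) z₀) (hne : ω z₀ ≠ 0) :
    ∃ m : ℝ, 1 ≤ m ∧ z₀ * deriv ω z₀ = m * ω z₀ := by
  have hz₀ : 0 < ‖z₀‖ := norm_pos_iff.2 fun h ↦ hne (h ▸ h0)
  have hmaps : ∀ z ∈ closedBall (0 : ℂ) 1, z₀ * z ∈ closedBall (0 : ℂ) ‖z₀‖ := fun z hz ↦ by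
    simpa [hz₀] using hz
  let φ : ℂ → ℂ := fun z ↦ ω (z₀ * z) / ω z₀
  have hφle : ∀ z ∈ closedBall (0 : ℂ) 1, ‖φ z‖ ≤ 1 := fun z hz ↦ by
    simpa [φ] using div_le_one_of_le₀ (hmax (hmaps z hz)) (norm_nonneg _)
  have hφd : DifferentiableOn ℂ φ (ball 0 1) :=
    (hω.comp (by fun_prop) fun z hz ↦ by simpa [hz₀] using hz).div_const _
  have hschwarz : ∀ z ∈ closedBall (0 : ℂ) 1, ‖φ z‖ ≤ ‖z‖ := fun z hz ↦ by
    rcases (mem_closedBall_zero_iff.1 hz).lt_or_eq with hlt | heq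
    · exact norm_le_norm_of_mapsTo_ball hφd
        (fun w hw ↦ mem_closedBall_zero_iff.2 (hφle w (ball_subset_closedBall hw)))
        (by simp [φ, h0]) hlt
    · exact heq ▸ hφle z hz
  have hderiv : HasDerivAt φ (z₀ * deriv ω z₀ / ω z₀) 1 := by
    have hω₁ : HasDerivAt ω (deriv ω z₀) (z₀ * 1) := by simpa using hω₀.hasDerivAt
    simpa [mul_comm] using (hω₁.comp (1 : ℂ) (hasDerivAt_const_mul z₀)).div_const (ω z₀)
  have hone := one_le_deriv_one_of_norm_le_norm hderiv.differentiableAt (by simp [φ, hne]) hschwarz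
  rw [hderiv.deriv, ← ofReal_one] at hone
  refine ⟨(z₀ * deriv ω z₀ / ω z₀).re, (Complex.le_def.1 hone).1, ?_⟩
  rw [← eq_re_of_ofReal_le hone, div_mul_cancel₀ _ hne]

lemma exists_norm_eq_and_forall_closedBall_le {E : Type*} [NormedAddCommGroup E] [NormedSpace ℝ E]
    [ProperSpace E] {u v : E → ℝ} {R : ℝ} {x₁ : E} (hu : ContinuousOn u (ball 0 R))
    (hv : ContinuousOn v (ball 0 R)) (h0 : u 0 < v 0) (hx₁ : x₁ ∈ ball 0 R) (h₁ : v x₁ ≤ u x₁) :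
    ∃ x₀ ∈ ball 0 R, u x₀ = v x₀ ∧ ∀ x ∈ closedBall 0 ‖x₀‖, u x ≤ v x := by
  have hsub : closedBall (0 : E) ‖x₁‖ ⊆ ball 0 R :=
    closedBall_subset_ball (mem_ball_zero_iff.1 hx₁)
  have hcompact : IsCompact {x ∈ closedBall (0 : E) ‖x₁‖ | v x ≤ u x} :=
    (isCompact_closedBall 0 ‖x₁‖).of_isClosed_subset
      (isClosed_closedBall.isClosed_le (hv.mono hsub) (hu.mono hsub)) (sep_subset _ _)
  obtain ⟨x₀, ⟨hx₀, hle₀⟩, hmin⟩ :=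
    hcompact.exists_isMinOn ⟨x₁, by simp, h₁⟩ continuous_norm.continuousOn
  have hlt : ∀ x ∈ ball (0 : E) ‖x₀‖, u x < v x := fun x hx ↦ by
    by_contra! h
    rw [mem_ball_zero_iff] at hx
    have hx' := mem_closedBall_zero_iff.2 (hx.le.trans (mem_closedBall_zero_iff.1 hx₀))
    exact (hmin ⟨hx', h⟩ : ‖x₀‖ ≤ ‖x‖).not_gt hx
  have hne : ‖x₀‖ ≠ 0 := norm_ne_zero_iff.2 fun h ↦ (h ▸ hle₀).not_gt h0
  have hsub₀ : closure (ball (0 : E) ‖x₀‖) ⊆ ball 0 R :=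
    closure_ball_subset_closedBall.trans
      ((closedBall_subset_closedBall (mem_closedBall_zero_iff.1 hx₀)).trans hsub)
  have hle : ∀ x ∈ closedBall (0 : E) ‖x₀‖, u x ≤ v x := fun x hx ↦
    le_on_closure (fun y hy ↦ (hlt y hy).le) (hu.mono hsub₀) (hv.mono hsub₀)
      (closure_ball (0 : E) hne ▸ hx)
  exact ⟨x₀, hsub hx₀, (hle x₀ (by simp)).antisymm hle₀, hle⟩

lemma exists_norm_eq_and_mul_wronskian_eq {N D : ℂ → ℂ} {R : ℝ} {z₁ : ℂ}
    (hN : DifferentiableOn ℂ N (ball 0 R)) (hD : DifferentiableOn ℂ D (ball 0 R)) (hN0 : N 0 = 0)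
    (hne : ∀ z ∈ ball (0 : ℂ) R, N z = 0 → D z ≠ 0) (hz₁ : z₁ ∈ ball 0 R) (h₁ : ‖D z₁‖ ≤ ‖N z₁‖) :
    ∃ z ∈ ball (0 : ℂ) R, ∃ m : ℝ, 1 ≤ m ∧ ‖N z‖ = ‖D z‖ ∧
      z * (deriv N z * D z - N z * deriv D z) = m * (N z * D z) := by
  have hR : 0 < R := pos_of_mem_ball hz₁
  obtain ⟨z₀, hz₀, heq, hle⟩ := exists_norm_eq_and_forall_closedBall_le hN.continuousOn.norm
    hD.continuousOn.norm (by simpa [hN0] using hne 0 (mem_ball_self hR) hN0) hz₁ h₁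
  have hsub : closedBall (0 : ℂ) ‖z₀‖ ⊆ ball 0 R :=
    closedBall_subset_ball (mem_ball_zero_iff.1 hz₀)
  have hD_ne : ∀ z ∈ closedBall (0 : ℂ) ‖z₀‖, D z ≠ 0 := fun z hz h ↦
    hne z (hsub hz) (norm_le_zero_iff.1 (by simpa [h] using hle z hz)) h
  have hz₀_mem : z₀ ∈ closedBall (0 : ℂ) ‖z₀‖ := by simp
  have hNd := hN.differentiableAt (isOpen_ball.mem_nhds hz₀)
  have hDd := hD.differentiableAt (isOpen_ball.mem_nhds hz₀)
  have hD₀ : D z₀ ≠ 0 := hD_ne z₀ hz₀_mem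
  have hnorm : ‖N z₀ / D z₀‖ = 1 := by rw [norm_div, heq, div_self (norm_ne_zero_iff.2 hD₀)]
  have hsub' := ball_subset_closedBall.trans hsub
  obtain ⟨m, hm, hjack⟩ := exists_one_le_mul_deriv_eq_of_isMaxOn_norm (ω := fun z ↦ N z / D z)
    ((hN.mono hsub').fun_div (hD.mono hsub') fun z hz ↦ hD_ne z (ball_subset_closedBall hz))
    (hNd.fun_div hDd hD₀) (by simp [hN0])
    (isMaxOn_iff.2 fun z hz ↦ by
      simpa only [hnorm, norm_div] using div_le_one_of_le₀ (hle z hz) (norm_nonneg _))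
    (norm_ne_zero_iff.1 (hnorm ▸ one_ne_zero))
  refine ⟨z₀, hz₀, m, hm, heq, ?_⟩
  rw [deriv_fun_div hNd hDd hD₀] at hjack
  field_simp at hjack
  linear_combination hjack

lemma norm_one_sub_lt_one_of_re_mul_deriv_div_lt {g : ℂ → ℂ} {R : ℝ}
    (hg : DifferentiableOn ℂ g (ball 0 R)) (hg0 : g 0 = 1) (hne : ∀ z ∈ ball (0 : ℂ) R, g z ≠ 0)
    (hre : ∀ z ∈ ball (0 : ℂ) R, (z * deriv g z / g z).re < 1 / 2) :
    ∀ z ∈ ball (0 : ℂ) R, ‖1 - g z‖ < 1 := by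
  intro z₁ hz₁
  by_contra! h₁
  obtain ⟨z, hz, m, hm, hnorm, hjack⟩ := exists_norm_eq_and_mul_wronskian_eq
    (N := fun z ↦ 1 - g z) (D := fun _ ↦ 1) (by fun_prop) (by fun_prop) (by simp [hg0]) (by simp)
    hz₁ (by simpa using h₁)
  rw [deriv_const_sub, deriv_const] at hjack
  have hlog : z * deriv g z / g z = m * (1 - (g z)⁻¹) := by
    have := hne z hz
    field_simp
    linear_combination -hjack
  have hinv : ((g z)⁻¹).re = 1 / 2 := by
    have hsq : normSq (1 - g z) = 1 := by rw [normSq_eq_norm_sq, hnorm, norm_one, one_pow]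
    rw [inv_re, div_eq_iff (normSq_pos.2 (hne z hz)).ne']
    simp only [normSq_apply, sub_re, sub_im, one_re, one_im] at hsq ⊢
    linarith
  have := hre z hz
  rw [hlog, re_ofReal_mul, sub_re, one_re, hinv] at this
  linarith

end Jack

section ClassG

lemma sq_norm_mul_sub_sub_sq_norm (δ : ℝ) (P : ℂ) {g : ℂ} (hg : g ≠ 0) :
    ‖(1 + δ) * (P - g)‖ ^ 2 - ‖(1 + δ) * g - P‖ ^ 2 =
      δ * ‖g‖ ^ 2 * ((2 + δ) * ‖P / g‖ ^ 2 - 2 * (1 + δ) * (P / g).re) := by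
  obtain ⟨p, rfl⟩ : ∃ p, P = p * g := ⟨P / g, (div_mul_cancel₀ P hg).symm⟩
  rw [mul_div_cancel_right₀ p hg, show (1 + δ) * (p * g - g) = g * ((1 + δ) * (p - 1)) by ring,
    show (1 + δ) * g - p * g = g * (1 + δ - p) by ring, norm_mul g, norm_mul g]
  have hnum : ‖(1 + δ) * (p - 1)‖ ^ 2 = (1 + δ) ^ 2 * (‖p‖ ^ 2 - 2 * p.re + 1) := by
    simp only [← normSq_eq_norm_sq, normSq_apply, mul_re, mul_im, add_re, add_im, sub_re, sub_im,
      one_re, one_im, ofReal_re, ofReal_im]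
    ring
  have hden : ‖1 + δ - p‖ ^ 2 = (1 + δ) ^ 2 - 2 * (1 + δ) * p.re + ‖p‖ ^ 2 := by
    simp only [← normSq_eq_norm_sq, normSq_apply, add_re, add_im, sub_re, sub_im, one_re, one_im,
      ofReal_re, ofReal_im]
    ring
  rw [mul_pow, mul_pow, hnum, hden]
  ring

variable {δ : ℝ}

lemma ne_zero_of_norm_mul_sub_le (hδ : 0 < δ) {P g : ℂ} (hP : P ≠ 0)
    (h : ‖(1 + δ) * (P - g)‖ ≤ ‖(1 + δ) * g - P‖) : g ≠ 0 := by
  rintro rfl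
  have hnorm : ‖(1 + δ : ℂ)‖ = 1 + δ := by
    rw [← ofReal_one, ← ofReal_add, Complex.norm_of_nonneg (by positivity)]
  rw [sub_zero, mul_zero, zero_sub, norm_neg, norm_mul, hnorm] at h
  nlinarith [norm_pos_iff.2 hP]

lemma half_le_re_of_mul_sq_norm_eq (hδ : 0 < δ) (hδ1 : δ ≤ 1) {m : ℝ} (hm : 1 ≤ m) {p : ℂ}
    (hp : p ≠ 0) (hcircle : (2 + δ) * ‖p‖ ^ 2 = 2 * (1 + δ) * p.re) :
    δ / 2 ≤ (p - 1 + (m / δ : ℝ) * (2 + δ - p - (1 + δ) * p⁻¹)).re := by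
  have hinv : (1 + δ) * (p⁻¹).re = (2 + δ) / 2 := by
    rw [inv_re, normSq_eq_norm_sq]
    have : ‖p‖ ≠ 0 := norm_ne_zero_iff.2 hp
    field_simp
    linarith
  have hre : p.re ≤ (2 + δ) / 2 := by
    have hsq : p.re ^ 2 ≤ ‖p‖ ^ 2 := sq_le_sq.2 (by simpa using abs_re_le_norm p)
    by_contra! h
    have : (2 + δ) * p.re ≤ 2 * (1 + δ) := by
      refine le_of_mul_le_mul_right ?_ (show 0 < p.re by linarith)
      nlinarith
    nlinarith
  have hval : (p - 1 + (m / δ : ℝ) * (2 + δ - p - (1 + δ) * p⁻¹)).re =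
      p.re - 1 + m / δ * ((2 + δ) / 2 - p.re) := by
    rw [show (1 + δ : ℂ) * p⁻¹ = ((1 + δ : ℝ) : ℂ) * p⁻¹ by push_cast; rfl]
    simp only [add_re, sub_re, re_ofReal_mul, hinv, one_re, re_ofNat, ofReal_re]
    ring
  have hmδ : 1 ≤ m / δ := (one_le_div hδ).2 (hδ1.trans hm)
  rw [hval]
  nlinarith

lemma sub_smul_deriv_dslope {𝕜 : Type*} [NontriviallyNormedField 𝕜] {E : Type*}
    [NormedAddCommGroup E] [NormedSpace 𝕜 E] {f : 𝕜 → E} {c z : 𝕜} (hf : DifferentiableAt 𝕜 f z) :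
    (z - c) • deriv (dslope f c) z = deriv f z - dslope f c z := by
  rcases eq_or_ne z c with rfl | hz
  · simp
  have hd := ((hasDerivAt_id' z).sub_const c).fun_smul
    ((differentiableAt_dslope_of_ne hz).2 hf).hasDerivAt
  simp only [sub_smul_dslope] at hd
  rw [← deriv_sub_const (f := f) (f c), hd.deriv, one_smul, add_sub_cancel_right]

lemma mul_deriv_dslope_zero {𝕜 : Type*} [NontriviallyNormedField 𝕜] {f : 𝕜 → 𝕜} {z : 𝕜}
    (hf : DifferentiableAt 𝕜 f z) : z * deriv (dslope f 0) z = deriv f z - dslope f 0 z := by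
  simpa using sub_smul_deriv_dslope (c := 0) hf

lemma one_add_half_le_re_of_norm_eq_of_wronskian_eq (hδ : 0 < δ) (hδ1 : δ ≤ 1) {m : ℝ}
    (hm : 1 ≤ m) {f : ℂ → ℂ} {z : ℂ} (hdf : DifferentiableAt ℂ (deriv f) z)
    (hdg : DifferentiableAt ℂ (dslope f 0) z) (hP : deriv f z ≠ 0)
    (hnorm : ‖(1 + δ) * (deriv f z - dslope f 0 z)‖ = ‖(1 + δ) * dslope f 0 z - deriv f z‖)
    (hjack : z * (deriv (fun w ↦ (1 + δ) * (deriv f w - dslope f 0 w)) z *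
        ((1 + δ) * dslope f 0 z - deriv f z) - (1 + δ) * (deriv f z - dslope f 0 z) *
          deriv (fun w ↦ (1 + δ) * dslope f 0 w - deriv f w) z) =
      m * ((1 + δ) * (deriv f z - dslope f 0 z) * ((1 + δ) * dslope f 0 z - deriv f z))) :
    1 + δ / 2 ≤ (1 + z * deriv (deriv f) z / deriv f z).re := by
  have hδ₀ : (δ : ℂ) ≠ 0 := ofReal_ne_zero.2 hδ.ne'
  have hδ₁ : (1 + δ : ℂ) ≠ 0 := mod_cast (by positivity : 1 + δ ≠ 0)
  have hg := ne_zero_of_norm_mul_sub_le hδ hP hnorm.le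
  have hslope := mul_deriv_dslope_zero hdg.of_dslope
  rw [deriv_const_mul_field, deriv_fun_sub hdf hdg, deriv_fun_sub (hdg.const_mul _) hdf,
    deriv_const_mul_field] at hjack
  have hlog : z * deriv (deriv f) z / deriv f z = deriv f z / dslope f 0 z - 1 +
      (m / δ : ℝ) *
        (2 + δ - deriv f z / dslope f 0 z - (1 + δ) * (deriv f z / dslope f 0 z)⁻¹) := by
    push_cast
    field_simp
    refine mul_left_cancel₀ hδ₁ ?_
    linear_combination hjack + (1 + δ) * δ * deriv f z * hslope
  have hcircle := sq_norm_mul_sub_sub_sq_norm δ (deriv f z) hg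
  rw [hnorm, sub_self, zero_eq_mul, or_iff_right (by positivity), sub_eq_zero] at hcircle
  rw [hlog, add_re, one_re]
  exact add_le_add_right (half_le_re_of_mul_sq_norm_eq hδ hδ1 hm (div_ne_zero hP hg) hcircle) 1

lemma norm_deriv_sub_dslope_lt (hδ : 0 < δ) (hδ1 : δ ≤ 1) {f : ℂ → ℂ} {R : ℝ}
    (hf : DifferentiableOn ℂ f (ball 0 R)) (hf' : ∀ z ∈ ball (0 : ℂ) R, deriv f z ≠ 0)
    (hG : ∀ z ∈ ball (0 : ℂ) R, (1 + z * deriv (deriv f) z / deriv f z).re < 1 + δ / 2) :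
    ∀ z ∈ ball (0 : ℂ) R,
      ‖(1 + δ) * (deriv f z - dslope f 0 z)‖ < ‖(1 + δ) * dslope f 0 z - deriv f z‖ := by
  intro z₁ hz₁
  by_contra! h₁
  have hδ₀ : (δ : ℂ) ≠ 0 := ofReal_ne_zero.2 hδ.ne'
  have hδ₁ : (1 + δ : ℂ) ≠ 0 := mod_cast (by positivity : 1 + δ ≠ 0)
  have hg : DifferentiableOn ℂ (dslope f 0) (ball 0 R) :=
    (differentiableOn_dslope (ball_mem_nhds _ (pos_of_mem_ball hz₁))).2 hf
  have hdf : DifferentiableOn ℂ (deriv f) (ball 0 R) := hf.deriv isOpen_ball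
  have hcommon : ∀ z ∈ ball (0 : ℂ) R, (1 + δ) * (deriv f z - dslope f 0 z) = 0 →
      (1 + δ) * dslope f 0 z - deriv f z ≠ 0 := fun z hz hN ↦ by
    have heq := sub_eq_zero.1 ((mul_eq_zero.1 hN).resolve_left hδ₁)
    rw [← heq, add_mul, one_mul, add_sub_cancel_left]
    exact mul_ne_zero hδ₀ (hf' z hz)
  obtain ⟨z, hz, m, hm, hnorm, hjack⟩ := exists_norm_eq_and_mul_wronskian_eq
    (N := fun z ↦ (1 + δ) * (deriv f z - dslope f 0 z))
    (D := fun z ↦ (1 + δ) * dslope f 0 z - deriv f z) (by fun_prop) (by fun_prop) (by simp)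
    hcommon hz₁ h₁
  have hnhds := isOpen_ball.mem_nhds hz
  exact (hG z hz).not_ge <| one_add_half_le_re_of_norm_eq_of_wronskian_eq hδ hδ1 hm
    (hdf.differentiableAt hnhds) (hg.differentiableAt hnhds) (hf' z hz) hnorm hjack

lemma re_deriv_div_dslope_mem_Ioo (hδ : 0 < δ) (hδ1 : δ ≤ 1) {f : ℂ → ℂ} {R : ℝ}
    (hf : DifferentiableOn ℂ f (ball 0 R)) (hf' : ∀ z ∈ ball (0 : ℂ) R, deriv f z ≠ 0)
    (hG : ∀ z ∈ ball (0 : ℂ) R, (1 + z * deriv (deriv f) z / deriv f z).re < 1 + δ / 2) :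
    ∀ z ∈ ball (0 : ℂ) R, (deriv f z / dslope f 0 z).re ∈ Ioo 0 (2 * (1 + δ) / (2 + δ)) := by
  intro z hz
  have hlt := norm_deriv_sub_dslope_lt hδ hδ1 hf hf' hG z hz
  have hg₀ := ne_zero_of_norm_mul_sub_le hδ (hf' z hz) hlt.le
  have hdisk : (2 + δ) * ‖deriv f z / dslope f 0 z‖ ^ 2 <
      2 * (1 + δ) * (deriv f z / dslope f 0 z).re := by
    have hneg := sub_neg.2 (pow_lt_pow_left₀ hlt (norm_nonneg _) two_ne_zero)
    rw [sq_norm_mul_sub_sub_sq_norm δ _ hg₀] at hneg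
    exact sub_neg.1 (neg_of_mul_neg_right hneg (by positivity))
  generalize deriv f z / dslope f 0 z = p at hdisk ⊢
  have hsq : p.re ^ 2 ≤ ‖p‖ ^ 2 := sq_le_sq.2 (by simpa using abs_re_le_norm p)
  have hpos : 0 < p.re := by
    have : 0 < 2 * (1 + δ) * p.re := hdisk.trans_le' (by positivity)
    exact pos_of_mul_pos_right this (by positivity)
  refine ⟨hpos, (lt_div_iff₀ (by positivity)).2 (lt_of_mul_lt_mul_right ?_ hpos.le)⟩
  nlinarith

end ClassG

section Integral

lemma hasDerivAt_of_eq_integral_mul {E : Type*} [NormedAddCommGroup E] [NormedSpace ℂ E]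
    [CompleteSpace E] {h J : ℂ → E} {R : ℝ} (hh : DifferentiableOn ℂ h (ball 0 R))
    (hJ : ∀ z ∈ ball (0 : ℂ) R, J z = ∫ t in (0 : ℝ)..1, z • h (t * z)) :
    ∀ z ∈ ball (0 : ℂ) R, HasDerivAt J (h z) z := by
  obtain ⟨H, hH⟩ := hh.isExactOn_ball
  have hJH : ∀ z ∈ ball (0 : ℂ) R, J z = H z - H 0 := fun z hz ↦ by
    have hmem : ∀ t ∈ uIcc (0 : ℝ) 1, (t : ℂ) * z ∈ ball (0 : ℂ) R := fun t ht ↦ by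
      rw [uIcc_of_le zero_le_one] at ht
      rw [mem_ball_zero_iff] at hz ⊢
      rw [norm_mul, Complex.norm_of_nonneg ht.1]
      exact (mul_le_of_le_one_left (norm_nonneg z) ht.2).trans_lt hz
    have hderiv : ∀ t ∈ uIcc (0 : ℝ) 1,
        HasDerivAt (fun t : ℝ ↦ H (t * z)) (z • h (t * z)) t := fun t ht ↦ by
      have hline : HasDerivAt (fun t : ℝ ↦ (t : ℂ) * z) z t := by
        simpa using (hasDerivAt_id t).ofReal_comp.mul_const z
      exact (hH _ (hmem t ht)).scomp t hline
    have hcont : ContinuousOn (fun t : ℝ ↦ z • h (t * z)) (uIcc 0 1) :=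
      (hh.continuousOn.comp (by fun_prop) hmem).const_smul z
    rw [hJ z hz, intervalIntegral.integral_eq_sub_of_hasDerivAt hderiv hcont.intervalIntegrable]
    simp
  intro z hz
  refine ((hH z hz).sub_const (H 0)).congr_of_eventuallyEq ?_
  filter_upwards [isOpen_ball.mem_nhds hz] with w hw using hJH w hw

lemma hasDerivAt_of_eq_integral_div_cpow {f J : ℂ → ℂ} {a : ℂ} {R : ℝ}
    (hf : DifferentiableOn ℂ f (ball 0 R)) (hf0 : f 0 = 0)
    (hslit : ∀ z ∈ ball (0 : ℂ) R, dslope f 0 z ∈ slitPlane)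
    (hJ : ∀ z ∈ ball (0 : ℂ) R, J z = ∫ t in (0 : ℝ)..1, (f (t * z) / (t * z)) ^ a * z) :
    ∀ z ∈ ball (0 : ℂ) R, HasDerivAt J (dslope f 0 z ^ a) z := by
  intro z₁ hz₁
  have hg : DifferentiableOn ℂ (dslope f 0) (ball 0 R) :=
    (differentiableOn_dslope (ball_mem_nhds _ (pos_of_mem_ball hz₁))).2 hf
  refine hasDerivAt_of_eq_integral_mul (hg.cpow_const hslit) (fun z hz ↦ ?_) z₁ hz₁
  rw [hJ z hz]
  refine intervalIntegral.integral_congr_Ioo_of_le zero_le_one fun t ht ↦ ?_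
  rcases eq_or_ne z 0 with rfl | hz0
  · simp
  · have htz : (t * z : ℂ) ≠ 0 := mul_ne_zero (ofReal_ne_zero.2 ht.1.ne') hz0
    have hquot : dslope f 0 (t * z) = f (t * z) / (t * z) := by
      rw [dslope_of_ne f htz, slope_def_field, hf0, sub_zero, sub_zero]
    simp only [hquot, smul_eq_mul, mul_comm z]

lemma one_add_mul_deriv_deriv_div_deriv_of_cpow {f J : ℂ → ℂ} {a z : ℂ}
    (hg : DifferentiableAt ℂ (dslope f 0) z) (hslit : dslope f 0 z ∈ slitPlane)
    (hJ : deriv J =ᶠ[𝓝 z] fun w ↦ dslope f 0 w ^ a) :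
    1 + z * deriv (deriv J) z / deriv J z = a * (deriv f z / dslope f 0 z) + 1 - a := by
  have hne := slitPlane_ne_zero hslit
  have hpow : dslope f 0 z ^ a ≠ 0 := by simp [cpow_eq_zero_iff, hne]
  rw [hJ.deriv_eq, deriv_cpow_const hg hslit, hJ.eq_of_nhds, cpow_sub _ _ hne, cpow_one]
  field_simp
  linear_combination a * mul_deriv_dslope_zero hg.of_dslope

lemma dslope_mem_slitPlane_of_re_mem_Ioo {f : ℂ → ℂ} {R : ℝ}
    (hf : DifferentiableOn ℂ f (ball 0 R)) (hf1 : deriv f 0 = 1)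
    (hre : ∀ z ∈ ball (0 : ℂ) R, (deriv f z / dslope f 0 z).re ∈ Ioo 0 (3 / 2)) :
    ∀ z ∈ ball (0 : ℂ) R, dslope f 0 z ∈ slitPlane := by
  intro z₁ hz₁
  have hg : DifferentiableOn ℂ (dslope f 0) (ball 0 R) :=
    (differentiableOn_dslope (ball_mem_nhds _ (pos_of_mem_ball hz₁))).2 hf
  -- Division by zero gives `0`, whose real part is not positive.
  have hne : ∀ z ∈ ball (0 : ℂ) R, dslope f 0 z ≠ 0 := fun z hz h ↦ by
    simpa [h] using (hre z hz).1
  have hlog : ∀ z ∈ ball (0 : ℂ) R, (z * deriv (dslope f 0) z / dslope f 0 z).re < 1 / 2 :=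
    fun z hz ↦ by
      rw [mul_deriv_dslope_zero (hf.differentiableAt (isOpen_ball.mem_nhds hz)), sub_div,
        div_self (hne z hz), sub_re, one_re]
      linarith [(hre z hz).2]
  have hlt :=
    norm_one_sub_lt_one_of_re_mul_deriv_div_lt hg (by rw [dslope_same, hf1]) hne hlog z₁ hz₁
  rw [norm_sub_rev] at hlt
  simpa using mem_slitPlane_of_norm_lt_one hlt

end Integral

lemma lt_mul_add_one_sub {δ lam α x : ℝ} (hδ : 0 < δ) (hlam : lam < 1)
    (hα1 : -(2 + δ) * (1 - lam) ≤ δ * α) (hα2 : α ≤ 1 - lam)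
    (hx : x ∈ Ioo 0 (2 * (1 + δ) / (2 + δ))) : lam < α * x + 1 - α := by
  obtain ⟨hx0, hx1⟩ := hx
  rw [lt_div_iff₀ (by positivity)] at hx1
  rcases lt_trichotomy α 0 with hα | rfl | hα
  · nlinarith [mul_lt_mul_of_neg_left hx1 hα]
  · linarith
  · nlinarith [mul_pos hα hx0]

theorem stmt_19_general {f : ℂ → ℂ} (hf : Fclass f) {δ : ℝ} (hδ : 0 < δ) (hδ1 : δ ≤ 1)
    (hG : ∀ z ∈ ball (0 : ℂ) 1, (1 + z * deriv (deriv f) z / deriv f z).re < 1 + δ / 2)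
    {lam α : ℝ} (hlam : lam < 1) (hα1 : -(2 + δ) * (1 - lam) ≤ δ * α) (hα2 : α ≤ 1 - lam)
    {J : ℂ → ℂ}
    (hJ : ∀ z ∈ ball (0 : ℂ) 1,
      J z = ∫ t in (0 : ℝ)..1, (f ((t : ℂ) * z) / ((t : ℂ) * z)) ^ (α : ℂ) * z) :
    ∀ z ∈ ball (0 : ℂ) 1, lam < (1 + z * deriv (deriv J) z / deriv J z).re := by
  obtain ⟨hfd, hf0, hf1, hf'⟩ := hf
  have hre := re_deriv_div_dslope_mem_Ioo hδ hδ1 hfd hf' hG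
  have hbound : 2 * (1 + δ) / (2 + δ) ≤ 3 / 2 := by
    rw [div_le_iff₀ (by positivity)]
    linarith
  have hslit := dslope_mem_slitPlane_of_re_mem_Ioo hfd hf1 fun z hz ↦
    Ioo_subset_Ioo_right hbound (hre z hz)
  have hJ' := hasDerivAt_of_eq_integral_div_cpow hfd hf0 hslit hJ
  intro z hz
  have hnhds := isOpen_ball.mem_nhds hz
  have hg := ((differentiableOn_dslope (ball_mem_nhds _ one_pos)).2 hfd).differentiableAt hnhds
  have hdJ : deriv J =ᶠ[𝓝 z] fun w ↦ dslope f 0 w ^ (α : ℂ) := by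
    filter_upwards [hnhds] with w hw using (hJ' w hw).deriv
  rw [one_add_mul_deriv_deriv_div_deriv_of_cpow hg (hslit z hz) hdJ, sub_re, add_re,
    re_ofReal_mul, one_re, ofReal_re]
  exact lt_mul_add_one_sub hδ hlam hα1 hα2 (hre z hz)

/-- for `f ∈ 𝒢` and `-3(1-λ) ≤ α ≤ 1-λ` with `λ < 1`, the function
`J_α[f](z) = ∫₀^z (f(w)/w)^α dw` belongs to `𝒦(λ)`. -/
theorem stmt_19 (f : ℂ → ℂ) (hf : Fclass f)
    (hG : ∀ z ∈ ball (0:ℂ) 1,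
      (1 + z * deriv (deriv f) z / deriv f z).re < 3 / 2)
    (lam α : ℝ) (hlam : lam < 1)
    (hα1 : -3 * (1 - lam) ≤ α) (hα2 : α ≤ 1 - lam)
    (J : ℂ → ℂ)
    (hJ : ∀ z ∈ ball (0:ℂ) 1,
      J z = ∫ t in (0:ℝ)..1,
        (f ((t : ℂ) * z) / ((t : ℂ) * z)) ^ (α : ℂ) * z) :
    ∀ z ∈ ball (0:ℂ) 1,
      lam < (1 + z * deriv (deriv J) z / deriv J z).re := by
  exact stmt_19_general hf one_pos le_rfl (fun z hz ↦ (hG z hz).trans_eq (by norm_num)) hlam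
    (by linarith) hα2 hJ
end
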